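/- Let n ≥ 2 and let φ : M_n(F) → M_n(F) be any map satisfying φ(XY + YX) = φ(X)φ(Y) + φ(Y)φ(X) for all X, Y ∈ M_n(F) and φ(0) = 0. Then φ is additive: φ(X + Y) = φ(X) + φ(Y) for all X, Y ∈ M_n(F). -/

import Mathlib

/-!
After rescaling, `φ` becomes a map `ψ` preserving the normalised Jordan product
`X ∘ Y = (XY + YX) / 2`, so the `n` matrices `ψ(Eᵢᵢ)` are pairwise orthogonal idempotents.

* If some `ψ(Eᵢᵢ)` vanishes, then so does `ψ(1)`: the zero set of `ψ` absorbs Jordan products, and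
  from the diagonal idempotent of a finite index set one reaches that of a larger set by two such
  products (`map_one_eq_zero`). Hence `ψ = 0`.
* Otherwise they are `n` nonzero orthogonal idempotents in `Mₙ(F)`, so a single conjugation turns
  them into the matrix units `Eᵢᵢ` (`exists_conj`), and we may assume `ψ(Eᵢᵢ) = Eᵢᵢ`.

In the second case, Jordan products with the `Eᵢᵢ` show that `ψ` respects the Peirce
decomposition: `ψ(c Eᵢⱼ)` is supported on `(i, j)` and `(j, i)`, and the entries of `ψ(X)` there
depend only on those of `X`. Comparing the entries of `ψ(Eⱼᵢ ∘ X)` at these positions gives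
`ψ(X)ᵢᵢ + ψ(X)ⱼⱼ = f(Xᵢᵢ + Xⱼⱼ)` with `ψ(c Eⱼⱼ) = f(c) Eⱼⱼ` (`Normalised.trace`). Applied to
`Eᵢᵢ ∘ X` this yields `ψ(X)ᵢᵢ = f(Xᵢᵢ)`, whence `f` is additive. The off-diagonal entries of
`ψ(X)` are then recovered from diagonal entries of `ψ(X ∘ Eᵢⱼ)` and `ψ(X ∘ Eⱼᵢ)`
(`Normalised.offdiag`), so they are additive as well.
-/

open Matrix

/-- The Jordan product `(XY + YX) / 2`, normalised so that `1` is its unit. -/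
def jordan {F ι : Type*} [Field F] [Fintype ι] (X Y : Matrix ι ι F) : Matrix ι ι F :=
  (2⁻¹ : F) • (X * Y + Y * X)

/-! ### Entries of Jordan products with matrix units -/

lemma jordan_entry {F ι : Type*} [Field F] [Fintype ι] (X Y : Matrix ι ι F) (a b : ι) :
    jordan X Y a b = 2⁻¹ * ((X * Y) a b + (Y * X) a b) := by
  simp [jordan]

section

variable {F ι : Type*} [Field F] [Fintype ι] [DecidableEq ι]

lemma single_mul_entry (i j : ι) (c : F) (M : Matrix ι ι F) (a b : ι) :
    (single i j c * M) a b = if a = i then c * M j b else 0 := by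
  split_ifs with h
  · subst h; simp
  · exact single_mul_apply_of_ne _ _ _ _ _ h _

lemma mul_single_entry (i j : ι) (c : F) (M : Matrix ι ι F) (a b : ι) :
    (M * single i j c) a b = if b = j then M a i * c else 0 := by
  split_ifs with h
  · subst h; simp
  · exact mul_single_apply_of_ne _ _ _ _ _ h _

lemma jordan_single_entry (i j : ι) (c : F) (M : Matrix ι ι F) (a b : ι) :
    jordan (single i j c) M a b =
      2⁻¹ * ((if a = i then c * M j b else 0) + (if b = j then M a i * c else 0)) := by
  rw [jordan_entry, single_mul_entry, mul_single_entry]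

/-! ### Maps fixing the diagonal matrix units -/

/-- A map preserving zero, the Jordan product and the diagonal matrix units. -/
structure Normalised (ψ : Matrix ι ι F → Matrix ι ι F) : Prop where
  map_jordan : ∀ X Y, ψ (jordan X Y) = jordan (ψ X) (ψ Y)
  map_zero : ψ 0 = 0
  map_unit : ∀ i, ψ (single i i 1) = single i i 1

namespace Normalised

variable {ψ : Matrix ι ι F → Matrix ι ι F}

/-- The Peirce space of matrices `Y` with `Eᵢᵢ ∘ Y = Y` is preserved, and it consists of the
multiples of `Eᵢᵢ`. -/
lemma map_diag (h2 : (2 : F) ≠ 0) (h : Normalised ψ) (i : ι) (c : F) :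
    ψ (single i i c) = single i i (ψ (single i i c) i i) := by
  have e : jordan (single i i (1 : F)) (single i i c) = single i i c := by
    ext a b
    rw [jordan_single_entry]
    by_cases ha : a = i <;> by_cases hb : b = i <;>
      simp_all [single_apply, eq_comm]
    field_simp; ring
  have k := h.map_jordan (single i i 1) (single i i c)
  rw [e, h.map_unit] at k
  ext a b
  have k' := congrFun (congrFun k a) b
  rw [jordan_single_entry] at k'
  by_cases ha : a = i
  · by_cases hb : b = i
    · subst ha hb; simp
    · have hb' : ¬ i = b := fun h => hb h.symm
      simp only [ha, hb, if_true, if_false] at k'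
      simp only [ha, single_apply, hb', and_false, if_false]
      field_simp at k'
      linear_combination k'
  · have ha' : ¬ i = a := fun h => ha h.symm
    simp only [single_apply, ha', false_and, if_false]
    by_cases hb : b = i
    · simp only [ha, hb, if_true, if_false] at k'
      rw [hb]
      field_simp at k'
      linear_combination k'
    · simpa [ha, hb] using k'

/-- Multiplying by `2 Eᵢᵢ` leaves `c Eᵢⱼ` unchanged. -/
lemma jordan_left (h2 : (2 : F) ≠ 0) {i j : ι} (hij : i ≠ j) (x c : F) :
    jordan (single i i (2 * x)) (single i j c) = single i j (x * c) := by
  have hji := hij.symm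
  simp only [jordan, single_mul_single_same, ne_eq, hji, not_false_eq_true,
    single_mul_single_of_ne, add_zero, smul_single, smul_eq_mul]
  congr 1; field_simp

lemma jordan_right (h2 : (2 : F) ≠ 0) {i j : ι} (hij : i ≠ j) (x c : F) :
    jordan (single j j (2 * x)) (single i j c) = single i j (x * c) := by
  have hji := hij.symm
  simp only [jordan, single_mul_single_same, ne_eq, hji, not_false_eq_true,
    single_mul_single_of_ne, zero_add, smul_single, smul_eq_mul]
  congr 1; field_simp

/-- The image of `c Eᵢⱼ` is supported on `(i, j)` and `(j, i)`: the other `Eₖₖ` annihilate it, and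
since `2 Eᵢᵢ` and `2 Eⱼⱼ` fix `c Eᵢⱼ`, multiples of `Eᵢᵢ` and of `Eⱼⱼ` fix its image, which clears
the diagonal. -/
lemma map_offdiag (h2 : (2 : F) ≠ 0) (h : Normalised ψ) {i j : ι} (hij : i ≠ j) (c : F) :
    ψ (single i j c) =
      single i j (ψ (single i j c) i j) + single j i (ψ (single i j c) j i) := by
  have hji := hij.symm
  set Y := ψ (single i j c) with hY
  have k0 : ∀ k, k ≠ i → k ≠ j → jordan (single k k 1) Y = 0 := by
    intro k hki hkj
    rw [← h.map_unit, hY, ← h.map_jordan]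
    have : jordan (single k k (1 : F)) (single i j c) = 0 := by
      simp [jordan, single_mul_single_of_ne, hki, hkj.symm]
    rw [this, h.map_zero]
  have k1 : Y = jordan (single i i (ψ (single i i 2) i i)) Y := by
    rw [← map_diag h2 h, hY, ← h.map_jordan]
    have := jordan_left h2 hij 1 c
    rw [mul_one, one_mul] at this
    rw [this]
  have k2 : Y = jordan (single j j (ψ (single j j 2) j j)) Y := by
    rw [← map_diag h2 h, hY, ← h.map_jordan]
    have := jordan_right h2 hij 1 c
    rw [mul_one, one_mul] at this
    rw [this]
  have hjj : Y j j = 0 := by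
    have := congrFun (congrFun k1 j) j
    rw [jordan_single_entry] at this
    simpa [hji] using this
  have hii : Y i i = 0 := by
    have := congrFun (congrFun k2 i) i
    rw [jordan_single_entry] at this
    simpa [hij] using this
  have row : ∀ k, k ≠ i → k ≠ j → ∀ b, Y k b = 0 := by
    intro k hki hkj b
    have := congrFun (congrFun (k0 k hki hkj) k) b
    rw [jordan_single_entry] at this
    by_cases hb : b = k
    · subst hb
      simp only [if_true, Matrix.zero_apply] at this
      field_simp at this
      simpa [h2] using (by linear_combination this : 2 * Y b b = 0)
    · simpa [hb, h2] using this
  have col : ∀ k, k ≠ i → k ≠ j → ∀ a, Y a k = 0 := by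
    intro k hki hkj a
    by_cases ha : a = k
    · subst ha; exact row a hki hkj a
    · have := congrFun (congrFun (k0 k hki hkj) a) k
      rw [jordan_single_entry] at this
      simpa [ha, h2] using this
  ext a b
  rw [Matrix.add_apply, single_apply, single_apply]
  by_cases hai : a = i
  · subst hai
    by_cases hbj : b = j
    · subst hbj; simp [hij, hji]
    · by_cases hba : b = a
      · subst hba; simp [hii, hji]
      · simp [hji, Ne.symm hbj, col b hba hbj]
  · by_cases haj : a = j
    · subst haj
      by_cases hbi : b = i
      · subst hbi; simp [hij]
      · by_cases hba : b = a
        · subst hba; simp [hjj, hij]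
        · simp [hij, Ne.symm hbi, col b hbi hba]
    · simp [Ne.symm hai, Ne.symm haj, row a hai haj]

/-- The relation reflecting `2 Eᵢᵢ ∘ (Eᵢⱼ ∘ Eⱼᵢ) = Eᵢᵢ`. In particular `ψ(Eᵢⱼ) ≠ 0`, which forces
`ψ` to commute with multiplication by `2` on `Eᵢᵢ`. -/
lemma two_and_pairing (h2 : (2 : F) ≠ 0) (h : Normalised ψ) {i j : ι} (hij : i ≠ j) :
    ψ (single i i 2) i i = 2 ∧
      ψ (single i j 1) i j * ψ (single j i 1) j i
        + ψ (single i j 1) j i * ψ (single j i 1) i j = 1 := by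
  have hji := hij.symm
  have e : jordan (single i i (2 : F)) (jordan (single i j 1) (single j i 1))
      = single i i 1 := by
    simp only [jordan, single_mul_single_same, ne_eq, hij, hji, not_false_eq_true, mul_add, add_mul,
      single_mul_single_of_ne, add_zero, smul_add,  smul_single,
      smul_eq_mul, ← single_add]
    congr 1; field_simp; norm_num
  have k := h.map_jordan (single i i 2) (jordan (single i j 1) (single j i 1))
  rw [e, h.map_unit, h.map_jordan, map_diag h2 h] at k
  have k1 := congrFun (congrFun k i) i
  have hY := map_offdiag h2 h hij 1
  have hW := map_offdiag h2 h hji 1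
  have y : ψ (single i j 1) = jordan (single i i (ψ (single i i 2) i i)) (ψ (single i j 1)) := by
    rw [← map_diag h2 h, ← h.map_jordan]
    have := jordan_left h2 hij (1 : F) 1
    rw [mul_one, one_mul] at this
    rw [this]
  have y1 := congrFun (congrFun y i) j
  have y2 := congrFun (congrFun y j) i
  rw [jordan_single_entry] at y1 y2 k1
  rw [jordan_entry] at k1
  set t := ψ (single i i 2) i i
  set p := ψ (single i j 1) i j
  set q := ψ (single i j 1) j i
  set r := ψ (single j i 1) j i
  set s := ψ (single j i 1) i j
  rw [hY, hW] at k1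
  simp [add_mul, mul_add, single_mul_single_of_ne, hij, hji] at k1 y1 y2
  field_simp at k1 y1 y2
  have ht : t = 2 := by
    apply mul_left_cancel₀ h2
    apply mul_left_cancel₀ h2
    linear_combination (t - 2) * k1 - 2 * t * r * y1 - 2 * t * s * y2
  refine ⟨ht, ?_⟩
  rw [ht] at k1
  field_simp at k1
  apply mul_left_cancel₀ h2
  linear_combination -k1

/-- `Eᵢⱼ` squares to zero, hence so does its image. -/
lemma square_zero (h2 : (2 : F) ≠ 0) (h : Normalised ψ) {i j : ι} (hij : i ≠ j) :
    ψ (single i j 1) i j * ψ (single i j 1) j i = 0 := by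
  have hji := hij.symm
  have k := h.map_jordan (single i j 1) (single i j 1)
  have e : jordan (single i j (1 : F)) (single i j 1) = 0 := by
    simp [jordan, single_mul_single_of_ne, hji]
  rw [e, h.map_zero] at k
  have k1 := congrFun (congrFun k i) i
  rw [jordan_entry] at k1
  have hY := map_offdiag h2 h hij 1
  set p := ψ (single i j 1) i j
  set q := ψ (single i j 1) j i
  rw [hY] at k1
  simp [add_mul, mul_add, single_mul_single_of_ne, hij, hji] at k1
  field_simp at k1
  have : 2 * (p * q) = 0 := by linear_combination -k1
  simpa [h2] using this

lemma diag_mul (h2 : (2 : F) ≠ 0) (h : Normalised ψ) (i : ι) (x y : F) :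
    ψ (single i i (x * y)) i i = ψ (single i i x) i i * ψ (single i i y) i i := by
  have e : jordan (single i i x) (single i i y) = single i i (x * y) := by
    simp only [jordan, single_mul_single_same, ← single_add, smul_single, smul_eq_mul]
    congr 1; field_simp; ring
  rw [← e, h.map_jordan, map_diag h2 h i x, map_diag h2 h i y]
  simp only [jordan, single_mul_single_same, ← single_add, smul_single, smul_eq_mul,
    single_apply_same]
  field_simp; ring

lemma map_offdiag_smul (h2 : (2 : F) ≠ 0) (h : Normalised ψ) {i j : ι} (hij : i ≠ j) (x : F) :
    ψ (single i j x) = ψ (single i i x) i i • ψ (single i j 1) := by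
  have e := jordan_left h2 hij x 1
  rw [mul_one] at e
  have hji := hij.symm
  rw [← e, h.map_jordan, map_diag h2 h, diag_mul h2 h, (two_and_pairing h2 h hij).1,
    map_offdiag h2 h hij 1]
  set p := ψ (single i j 1) i j
  set q := ψ (single i j 1) j i
  simp only [jordan, mul_add, add_mul, single_mul_single_same, ne_eq, hij, hji, not_false_eq_true,
    single_mul_single_of_ne, add_zero, zero_add, smul_add, smul_single, smul_eq_mul]
  congr 2
  · field_simp
  · field_simp

/-- The entries of `ψ X` at `(i, j)` are determined by those of `X` at `(i, j)` and `(j, i)`,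
because `Eᵢᵢ ∘ (Eⱼⱼ ∘ X)` depends on nothing else. -/
lemma offdiag_congr (h2 : (2 : F) ≠ 0) (h : Normalised ψ) {i j : ι} (hij : i ≠ j)
    {X X' : Matrix ι ι F} (h1 : X i j = X' i j) (h1' : X j i = X' j i) :
    ψ X i j = ψ X' i j := by
  have hji := hij.symm
  have e : jordan (single i i (1 : F)) (jordan (single j j 1) X)
      = jordan (single i i 1) (jordan (single j j 1) X') := by
    ext a b
    simp only [jordan_single_entry]
    by_cases hai : a = i <;> by_cases haj : a = j <;> by_cases hbi : b = i <;>
      by_cases hbj : b = j <;> simp_all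
  have k := congrArg ψ e
  simp only [h.map_jordan, h.map_unit] at k
  have k1 := congrFun (congrFun k i) j
  simp only [jordan_single_entry] at k1
  simpa [hij, hji, h2] using k1

/-- The sum of two diagonal entries of `ψ X` is a function of the corresponding sum for `X`. -/
lemma trace (h2 : (2 : F) ≠ 0) (h : Normalised ψ) {i j : ι} (hij : i ≠ j) (X : Matrix ι ι F) :
    ψ X i i + ψ X j j = ψ (single j j (X i i + X j j)) j j := by
  have hji := hij.symm
  have e1 : jordan (single j i (2 : F)) X j i = single j i (X i i + X j j) j i := by
    rw [jordan_single_entry]; simp; field_simp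
  have e2 : jordan (single j i (2 : F)) X i j = single j i (X i i + X j j) i j := by
    rw [jordan_single_entry]; simp [hij, hji]
  have k1 := offdiag_congr h2 h hji e1 e2
  have k2 := offdiag_congr h2 h hij e2 e1
  rw [h.map_jordan, map_offdiag_smul h2 h hji 2,
    map_offdiag_smul h2 h hji (X i i + X j j),
    (two_and_pairing h2 h hji).1] at k1 k2
  have hW := map_offdiag h2 h hji 1
  have pr := (two_and_pairing h2 h hij).2
  rw [jordan_entry] at k1 k2
  set t := ψ (single j j (X i i + X j j)) j j
  set p := ψ (single i j 1) i j
  set q := ψ (single i j 1) j i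
  set r := ψ (single j i 1) j i
  set s := ψ (single j i 1) i j
  rw [hW] at k1 k2
  simp [add_mul, mul_add, hij, hji] at k1 k2
  field_simp at k1 k2
  linear_combination p * k1 + q * k2 + (t - ψ X i i - ψ X j j) * pr

/-- `trace` applied to `Eᵢᵢ ∘ X`, whose `(j, j)` entry vanishes. -/
lemma diag_entry (h2 : (2 : F) ≠ 0) (h : Normalised ψ) {i j : ι} (hij : i ≠ j)
    (X : Matrix ι ι F) : ψ X i i = ψ (single j j (X i i)) j j := by
  have hji := hij.symm
  have k := trace h2 h hij (jordan (single i i 1) X)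
  rw [h.map_jordan, h.map_unit] at k
  simp only [jordan_single_entry] at k
  have half : ∀ z : F, 2⁻¹ * (z + z) = z := fun z => by field_simp; ring
  simpa [hji, half] using k

/-- All diagonal matrix units carry the same coordinate function. -/
lemma diag_entry_self [Nontrivial ι] (h2 : (2 : F) ≠ 0) (h : Normalised ψ) (i : ι)
    (X : Matrix ι ι F) : ψ X i i = ψ (single i i (X i i)) i i := by
  obtain ⟨j, hj⟩ := exists_ne i
  rw [diag_entry h2 h hj.symm X, diag_entry h2 h hj.symm (single i i (X i i)), single_apply_same]

/-- `trace` applied to the diagonal matrix `x Eᵢᵢ + y Eⱼⱼ`. -/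
lemma diag_add [Nontrivial ι] (h2 : (2 : F) ≠ 0) (h : Normalised ψ) (j : ι) (x y : F) :
    ψ (single j j (x + y)) j j = ψ (single j j x) j j + ψ (single j j y) j j := by
  obtain ⟨i, hij⟩ := exists_ne j
  have hji := hij.symm
  have k := trace h2 h hij (single i i x + single j j y)
  rw [diag_entry h2 h hij, diag_entry_self h2 h j (single i i x + single j j y)] at k
  simpa [single_apply, hij, hji] using k.symm

/-- The off-diagonal entries of `ψ X`, read off from diagonal entries of `ψ (Eⱼᵢ ∘ X)` and
`ψ (Eᵢⱼ ∘ X)`. -/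
lemma offdiag [Nontrivial ι] (h2 : (2 : F) ≠ 0) (h : Normalised ψ) {i j : ι} (hij : i ≠ j)
    (X : Matrix ι ι F) :
    ψ X i j = ψ (single i j 1) i j * ψ (single j j (X i j)) j j
      + ψ (single j i 1) i j * ψ (single j j (X j i)) j j := by
  have hji := hij.symm
  have k1 := diag_entry_self h2 h j (jordan (single j i 2) X)
  have k2 := diag_entry_self h2 h j (jordan (single i j 2) X)
  have f2 : ψ (single i i 2) i i = 2 := (two_and_pairing h2 h hij).1
  have g2 : ψ (single j j 2) j j = 2 := (two_and_pairing h2 h hji).1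
  rw [h.map_jordan, map_offdiag_smul h2 h hji, g2] at k1
  rw [h.map_jordan, map_offdiag_smul h2 h hij, f2] at k2
  have e1 : jordan (single j i (2 : F)) X j j = X i j := by
    rw [jordan_single_entry]; simp [hji, h2]
  have e2 : jordan (single i j (2 : F)) X j j = X j i := by
    rw [jordan_single_entry]; simp [hji]; field_simp
  rw [e1, jordan_entry] at k1
  rw [e2, jordan_entry] at k2
  have hY := map_offdiag h2 h hij 1
  have hW := map_offdiag h2 h hji 1
  have pr := (two_and_pairing h2 h hij).2
  have s1 := square_zero h2 h hij
  have s2 := square_zero h2 h hji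
  set t := ψ (single j j (X i j)) j j
  set u := ψ (single j j (X j i)) j j
  set p := ψ (single i j 1) i j
  set q := ψ (single i j 1) j i
  set r := ψ (single j i 1) j i
  set s := ψ (single j i 1) i j
  rw [hW] at k1
  rw [hY] at k2
  simp [add_mul, mul_add, hji] at k1 k2
  field_simp at k1 k2
  have ps : p * s = 0 := by
    linear_combination (-(p * s)) * pr + s ^ 2 * s1 + p ^ 2 * s2
  linear_combination p * k1 + s * k2 - ψ X i j * pr - 2 * ψ X j i * ps

theorem additive [Nontrivial ι] (h2 : (2 : F) ≠ 0) (h : Normalised ψ) (X Y : Matrix ι ι F) :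
    ψ (X + Y) = ψ X + ψ Y := by
  ext i j
  rw [Matrix.add_apply]
  by_cases hij : i = j
  · subst hij
    rw [diag_entry_self h2 h i (X + Y), Matrix.add_apply, diag_add h2 h, ← diag_entry_self h2 h,
      ← diag_entry_self h2 h]
  · rw [offdiag h2 h hij (X + Y), offdiag h2 h hij X, offdiag h2 h hij Y, Matrix.add_apply,
      Matrix.add_apply, diag_add h2 h, diag_add h2 h]
    ring

end Normalised

/-! ### The degenerate case -/

/-- If one diagonal matrix unit is mapped to zero, then so are all diagonal idempotents, by
induction on their support. -/
lemma map_one_eq_zero (h2 : (2 : F) ≠ 0) {ψ : Matrix ι ι F → Matrix ι ι F}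
    (hJ : ∀ X Y, ψ (jordan X Y) = jordan (ψ X) (ψ Y)) (h0 : ψ 0 = 0) {i : ι}
    (hi : ψ (single i i 1) = 0) : ψ 1 = 0 := by
  have absorb : ∀ A B, ψ A = 0 → ψ (jordan A B) = 0 := by
    intro A B hA; rw [hJ, hA]; simp [jordan]
  have units : ∀ j, ψ (single j j 1) = 0 := by
    intro j
    by_cases hij : i = j
    · rwa [← hij]
    have hji : ¬ j = i := fun h => hij h.symm
    have e : jordan (jordan (jordan (single i i (1 : F)) (single i j 2)) (single j i 2))
        (single j j 1) = single j j 1 := by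
      simp only [jordan, single_mul_single_same, ne_eq, hij, hji, not_false_eq_true, mul_add,
        add_mul, single_mul_single_of_ne, add_zero, zero_add, smul_add,
        smul_single, smul_eq_mul, ← single_add]
      congr 1; field_simp; norm_num
    rw [← e]
    exact absorb _ _ (absorb _ _ (absorb _ _ hi))
  have key : ∀ s : Finset ι, ψ (∑ k ∈ s, single k k 1) = 0 := by
    intro s
    induction s using Finset.induction_on with
    | empty => simpa using h0
    | insert a s ha ih =>
      rcases s.eq_empty_or_nonempty with rfl | ⟨b, hb⟩
      · simpa using units a
      have hab : a ≠ b := fun h => ha (h ▸ hb)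
      have hba := hab.symm
      obtain ⟨t, hbt, rfl⟩ : ∃ t : Finset ι, b ∉ t ∧ insert b t = s :=
        ⟨s.erase b, Finset.notMem_erase b s, Finset.insert_erase hb⟩
      have hat : a ∉ t := fun h => ha (Finset.mem_insert_of_mem h)
      rw [Finset.sum_insert ha, Finset.sum_insert hbt]
      rw [Finset.sum_insert hbt] at ih
      have l0 : ∀ x y : ι, x ∉ t → ∀ c : F, (∑ k ∈ t, single k k (1 : F)) * single x y c = 0 := by
        intro x y hx c
        rw [Finset.sum_mul]
        refine Finset.sum_eq_zero fun k hk => single_mul_single_of_ne _ _ _ _ ?_ _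
        rintro rfl; exact hx hk
      have r0 : ∀ x y : ι, y ∉ t → ∀ c : F, single x y c * (∑ k ∈ t, single k k (1 : F)) = 0 := by
        intro x y hy c
        rw [Finset.mul_sum]
        refine Finset.sum_eq_zero fun k hk => single_mul_single_of_ne _ _ _ _ ?_ _
        rintro rfl; exact hy hk
      have sq : (∑ k ∈ t, single k k (1 : F)) * (∑ k ∈ t, single k k (1 : F))
          = ∑ k ∈ t, single k k (1 : F) := by
        rw [Finset.sum_mul]
        refine Finset.sum_congr rfl fun k hk => ?_
        rw [Finset.mul_sum, Finset.sum_eq_single k]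
        · simp
        · intro l _ hl; exact single_mul_single_of_ne _ _ _ _ hl.symm _
        · intro h; exact absurd hk h
      set D := ∑ k ∈ t, single k k (1 : F)
      -- Trade the idempotent `E_bb` for `E_ba`, then `E_ba` for `E_aa + E_bb`.
      have e1 : jordan (single b b 1 + D) (D + single b a 2) = D + single b a 1 := by
        simp only [jordan, mul_add, add_mul, sq, l0 _ _ hat, l0 _ _ hbt, r0 _ _ hat, r0 _ _ hbt,
          single_mul_single_same, ne_eq, hab, hba, not_false_eq_true, single_mul_single_of_ne,
          add_zero, zero_add, smul_add, smul_single, smul_eq_mul]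
        have : (2⁻¹ : F) • D + (2⁻¹ : F) • D = D := by
          rw [← add_smul]; convert one_smul F D using 2; field_simp; norm_num
        have hc : (2⁻¹ : F) * (1 * 2) = 1 := by field_simp
        rw [hc]
        nth_rw 3 [← this]
        abel
      have e2 : jordan (D + single b a 1) (D + single a b 2)
          = single a a 1 + (single b b 1 + D) := by
        simp only [jordan, mul_add, add_mul, sq, l0 _ _ hat, l0 _ _ hbt, r0 _ _ hat, r0 _ _ hbt,
          single_mul_single_same,
          add_zero, zero_add, smul_add, smul_single, smul_eq_mul]
        have : (2⁻¹ : F) • D + (2⁻¹ : F) • D = D := by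
          rw [← add_smul]; convert one_smul F D using 2; field_simp; norm_num
        have hc : (2⁻¹ : F) * (1 * 2) = 1 := by field_simp
        have hc' : (2⁻¹ : F) * (2 * 1) = 1 := by field_simp
        rw [hc, hc']
        nth_rw 3 [← this]
        abel
      rw [← e2, ← e1]
      exact absorb _ _ (absorb _ _ ih)
  have := key Finset.univ
  have e : ∑ k, single k k (1 : F) = (1 : Matrix ι ι F) := by
    ext a b
    rw [Matrix.sum_apply, Finset.sum_eq_single a]
    · simp [single_apply, Matrix.one_apply]
    · intro k _ hk; simp [hk]
    · simp
  rwa [e] at this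

/-! ### Reduction to the normalised case -/

/-- Orthogonal nonzero idempotents indexed by `ι` itself are simultaneously conjugate to the
diagonal matrix units. -/
lemma exists_conj (q : ι → Matrix ι ι F) (hne : ∀ i, q i ≠ 0) (hid : ∀ i, q i * q i = q i)
    (hort : ∀ i j, i ≠ j → q i * q j = 0) :
    ∃ S T : Matrix ι ι F, S * T = 1 ∧ T * S = 1 ∧ ∀ i, T * q i * S = single i i 1 := by
  -- The columns of `S` are nonzero vectors in the ranges of the idempotents.
  have hv : ∀ i, ∃ v : ι → F, v ≠ 0 ∧ q i *ᵥ v = v := by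
    intro i
    obtain ⟨w, hw⟩ : ∃ w, q i *ᵥ w ≠ 0 := by
      by_contra! hc
      apply hne i
      ext a b
      have := congrFun (hc (Pi.single b 1)) a
      simpa using this
    exact ⟨q i *ᵥ w, hw, by rw [mulVec_mulVec, hid]⟩
  choose v hv0 hvq using hv
  have hvo : ∀ i j, i ≠ j → q i *ᵥ v j = 0 := by
    intro i j hij
    rw [← hvq j, mulVec_mulVec, hort i j hij, zero_mulVec]
  have li : LinearIndependent F v := by
    rw [Fintype.linearIndependent_iff]
    intro g hg i
    have := congrArg (fun w => q i *ᵥ w) hg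
    simp only [mulVec_sum, mulVec_smul, mulVec_zero] at this
    rw [Finset.sum_eq_single i (fun j _ hj => by rw [hvo i j hj.symm, smul_zero]) (by simp),
      hvq] at this
    exact (smul_eq_zero.mp this).resolve_right (hv0 i)
  set S : Matrix ι ι F := (Matrix.of v)ᵀ with hS
  have hu : IsUnit S := by
    rw [← Matrix.linearIndependent_cols_iff_isUnit]
    exact li
  have hd : IsUnit S.det := (Matrix.isUnit_iff_isUnit_det S).mp hu
  refine ⟨S, S⁻¹, Matrix.mul_nonsing_inv S hd, Matrix.nonsing_inv_mul S hd, fun i => ?_⟩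
  have : q i * S = S * single i i 1 := by
    ext a b
    have e : (q i * S) a b = (q i *ᵥ v b) a := rfl
    rw [e, mul_single_entry]
    split_ifs with hb
    · subst hb; rw [hvq]; simp [hS]
    · rw [hvo i b (fun h => hb h.symm)]; rfl
  rw [Matrix.mul_assoc, this, ← Matrix.mul_assoc, Matrix.nonsing_inv_mul S hd, Matrix.one_mul]

lemma additive_of_jordan [Nontrivial ι] (h2 : (2 : F) ≠ 0) {ψ : Matrix ι ι F → Matrix ι ι F}
    (hJ : ∀ X Y, ψ (jordan X Y) = jordan (ψ X) (ψ Y)) (h0 : ψ 0 = 0) (X Y : Matrix ι ι F) :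
    ψ (X + Y) = ψ X + ψ Y := by
  have half : ∀ Z : Matrix ι ι F, (2⁻¹ : F) • (Z + Z) = Z := by
    intro Z
    rw [← two_smul F Z, smul_smul, inv_mul_cancel₀ h2, one_smul]
  by_cases hex : ∃ i, ψ (single i i 1) = 0
  · obtain ⟨i, hi⟩ := hex
    have h1 := map_one_eq_zero h2 hJ h0 hi
    have hz : ∀ Z, ψ Z = 0 := by
      intro Z
      have e : jordan 1 Z = Z := by simp only [jordan, Matrix.one_mul, Matrix.mul_one, half]
      rw [← e, hJ, h1]; simp [jordan]
    simp [hz]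
  push Not at hex
  have hid : ∀ i, ψ (single i i 1) * ψ (single i i 1) = ψ (single i i 1) := by
    intro i
    have k := hJ (single i i 1) (single i i 1)
    simp only [jordan, half, single_mul_single_same, mul_one] at k
    exact k.symm
  have hort : ∀ i j, i ≠ j → ψ (single i i 1) * ψ (single j j 1) = 0 := by
    intro i j hij
    have k := hJ (single i i 1) (single j j 1)
    have e : jordan (single i i (1 : F)) (single j j 1) = 0 := by
      simp [jordan, single_mul_single_of_ne, hij, hij.symm]
    rw [e, h0] at k
    have hi := hid i
    set p := ψ (single i i 1)
    set q := ψ (single j j 1)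
    have k' : p * q + q * p = 0 := by
      have := k.symm
      rw [jordan, smul_eq_zero] at this
      exact this.resolve_left (inv_ne_zero h2)
    -- From `pq = -qp` and `p² = p`: `pq = -pqp = qp`, so `2pq = 0`.
    have a1 : p * q + p * q * p = 0 := by
      have := congrArg (fun z => p * z) k'
      simpa [mul_add, ← Matrix.mul_assoc, hi] using this
    have a2 : p * q * p + q * p = 0 := by
      have := congrArg (fun z => z * p) k'
      simpa [add_mul, Matrix.mul_assoc, hi] using this
    have a3 : p * q = q * p := by
      rw [eq_neg_of_add_eq_zero_left a1, eq_neg_of_add_eq_zero_right a2]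
    rw [← half (p * q)]
    nth_rw 2 [a3]
    rw [k', smul_zero]
  obtain ⟨S, T, hST, hTS, hq⟩ := exists_conj (fun i => ψ (single i i 1)) hex hid hort
  have hmul : ∀ A B : Matrix ι ι F, (T * A * S) * (T * B * S) = T * (A * B) * S := by
    intro A B
    calc (T * A * S) * (T * B * S) = T * A * (S * T) * B * S := by
          simp only [Matrix.mul_assoc]
      _ = T * (A * B) * S := by rw [hST]; simp only [Matrix.mul_assoc, Matrix.one_mul]
  have hN : Normalised (fun Z => T * ψ Z * S) :=
    { map_jordan := fun A B => by
        rw [hJ]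
        simp only [jordan, hmul, Matrix.mul_smul, Matrix.smul_mul, mul_add, add_mul]
      map_zero := by simp [h0]
      map_unit := hq }
  have k := hN.additive h2 X Y
  simp only [← mul_add, ← add_mul] at k
  have back : ∀ A : Matrix ι ι F, S * (T * A * S) * T = A := by
    intro A
    calc S * (T * A * S) * T = (S * T) * A * (S * T) := by simp only [Matrix.mul_assoc]
      _ = A := by rw [hST, Matrix.one_mul, Matrix.mul_one]
  rw [← back (ψ (X + Y)), k, back]

end

theorem stmt_2 {F : Type*} [Field F] (h2 : (2 : F) ≠ 0) (n : ℕ) (hn : 2 ≤ n)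
    (φ : Matrix (Fin n) (Fin n) F → Matrix (Fin n) (Fin n) F)
    (hφ : ∀ X Y : Matrix (Fin n) (Fin n) F,
      φ (X * Y + Y * X) = φ X * φ Y + φ Y * φ X)
    (h0 : φ 0 = 0) :
    ∀ X Y : Matrix (Fin n) (Fin n) F, φ (X + Y) = φ X + φ Y := by
  intro X Y
  have : Nontrivial (Fin n) := Fin.nontrivial_iff_two_le.mpr hn
  have hJ : ∀ A B : Matrix (Fin n) (Fin n) F,
      (2 : F) • φ ((2⁻¹ : F) • jordan A B)
        = jordan ((2 : F) • φ ((2⁻¹ : F) • A)) ((2 : F) • φ ((2⁻¹ : F) • B)) := by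
    intro A B
    have e : (2⁻¹ : F) • jordan A B = ((2⁻¹ : F) • A) * ((2⁻¹ : F) • B)
        + ((2⁻¹ : F) • B) * ((2⁻¹ : F) • A) := by
      simp only [jordan, Matrix.smul_mul, Matrix.mul_smul, smul_add]
    rw [e, hφ]
    simp only [jordan, Matrix.smul_mul, Matrix.mul_smul, ← smul_add, smul_smul]
    congr 1; field_simp
  have k := additive_of_jordan h2 (ψ := fun Z => (2 : F) • φ ((2⁻¹ : F) • Z)) hJ
    (by simp [h0]) ((2 : F) • X) ((2 : F) • Y)
  simp only [← smul_add, smul_smul, inv_mul_cancel₀ h2, one_smul] at k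
  exact smul_right_injective _ h2 k
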